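/- arXiv:1410.4315 — 5 statements merged into one kernel-verified Lean document; each statement's English description precedes it below -/
import Mathlib

section
/- Let n ∈ ℕ, σ ∈ {0,1}^n, and let μ_{j,m} be the Haar coefficients of the local discrepancy of the digit shifted Hammersley point set R_{n,σ} with N = 2^n points. If j = (j_1,j_2) with 0 ≤ j_1,j_2 ≤ n and j_1 + j_2 ≥ n − 1, then |μ_{j,m}| ≤ 2^{−(n+j_1+j_2+1)} for all m ∈ D_j. -/
open MeasureTheory

/-- The real value of a binary digit. -/
noncomputable def bval (b : Bool) : ℝ := if b then 1 else 0

/-- The two-dimensional digit shifted Hammersley point set with `2^n` points,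
indexed by the digit vectors `t : Fin n → Bool`.  The index `i : Fin n`
corresponds to the digit `t_{i+1}` of the paper. -/
noncomputable def hammersleyShifted (n : ℕ) (σ : Fin n → Bool) (t : Fin n → Bool) : ℝ × ℝ :=
  (∑ i : Fin n, bval (t i) / 2 ^ (n - i.val),
   ∑ i : Fin n, bval (t i != σ i) / 2 ^ (i.val + 1))

/-- Number of points of the (indexed) point set `P` lying in `[0,t₁) × [0,t₂)`. -/
noncomputable def countIn {ι : Type*} [Fintype ι] (P : ι → ℝ × ℝ) (t : ℝ × ℝ) : ℕ :=
  (Finset.univ.filter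
    (fun k => 0 ≤ (P k).1 ∧ (P k).1 < t.1 ∧ 0 ≤ (P k).2 ∧ (P k).2 < t.2)).card

/-- The local discrepancy `D_N(P,t) = A_N([0,t),P)/N - t₁t₂` of an indexed point set. -/
noncomputable def localDisc {ι : Type*} [Fintype ι] (P : ι → ℝ × ℝ) (t : ℝ × ℝ) : ℝ :=
  (countIn P t : ℝ) / (Fintype.card ι) - t.1 * t.2

/-- The `L_p`-discrepancy of an indexed point set. -/
noncomputable def LpDisc (p : ℝ) {ι : Type*} [Fintype ι] (P : ι → ℝ × ℝ) : ℝ :=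
  (∫ t in Set.Icc (0 : ℝ × ℝ) 1, |localDisc P t| ^ p) ^ (1 / p)

/-- One-dimensional `L∞`-normalized Haar function `h_{j,m}`, with `j ∈ ℤ`, `j = -1`
giving the indicator of `[0,1)` and `j ≥ 0` the usual Haar function on `I_{j,m}`. -/
noncomputable def haar1 (j : ℤ) (m : ℕ) (x : ℝ) : ℝ :=
  if j = -1 then (if 0 ≤ x ∧ x < 1 then 1 else 0)
  else if (2 * m : ℝ) / 2 ^ (j.toNat + 1) ≤ x ∧ x < (2 * m + 1 : ℝ) / 2 ^ (j.toNat + 1) then 1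
  else if (2 * m + 1 : ℝ) / 2 ^ (j.toNat + 1) ≤ x ∧ x < (2 * m + 2 : ℝ) / 2 ^ (j.toNat + 1) then -1
  else 0

/-- Two-dimensional (tensor product) Haar function. -/
noncomputable def haar2 (j : ℤ × ℤ) (m : ℕ × ℕ) (x : ℝ × ℝ) : ℝ :=
  haar1 j.1 m.1 x.1 * haar1 j.2 m.2 x.2

/-- One-dimensional dyadic interval `I_{j,m}` (with `I_{-1,0} = [0,1)`). -/
noncomputable def dyadicI (j : ℤ) (m : ℕ) : Set ℝ :=
  if j = -1 then Set.Ico (0 : ℝ) 1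
  else Set.Ico ((m : ℝ) / 2 ^ j.toNat) ((m + 1 : ℝ) / 2 ^ j.toNat)

/-- Haar coefficient `μ_{j,m} = ∫_{[0,1]²} D_N(P,t) h_{j,m}(t) dt` of the local
discrepancy of an indexed point set. -/
noncomputable def haarCoeff {ι : Type*} [Fintype ι] (P : ι → ℝ × ℝ) (j : ℤ × ℤ) (m : ℕ × ℕ) : ℝ :=
  ∫ t in Set.Icc (0 : ℝ × ℝ) 1, localDisc P t * haar2 j m t

/-- Number of zero components of the shift `σ`. -/
noncomputable def zeroCount {n : ℕ} (σ : Fin n → Bool) : ℕ :=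
  (Finset.univ.filter (fun j => σ j = false)).card

/-- The symmetrized digit shifted Hammersley point set `R_{n,σ} ∪ R_{n,σ⊕1}`
with `2^(n+1)` points, indexed by `Bool × (Fin n → Bool)`. -/
noncomputable def hammersleySym (n : ℕ) (σ : Fin n → Bool) :
    Bool × (Fin n → Bool) → ℝ × ℝ :=
  fun bt => if bt.1 then hammersleyShifted n (fun i => !(σ i)) bt.2
            else hammersleyShifted n σ bt.2

/-- The multiset `R_{n,σ} ∪ {(x, 1-y) : (x,y) ∈ R_{n,σ}}` with `2^(n+1)` points
(counted with multiplicity), indexed by `Bool × (Fin n → Bool)`. -/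
noncomputable def hammersleySymTilde (n : ℕ) (σ : Fin n → Bool) :
    Bool × (Fin n → Bool) → ℝ × ℝ :=
  fun bt => if bt.1 then ((hammersleyShifted n σ bt.2).1, 1 - (hammersleyShifted n σ bt.2).2)
            else hammersleyShifted n σ bt.2


lemma aux_bval_nonneg (b : Bool) : 0 ≤ bval b := by unfold bval; split_ifs <;> norm_num

lemma aux_Y_bounds : ∀ (n : ℕ) (b : Fin n → Bool),
    0 ≤ ∑ i : Fin n, bval (b i) / 2 ^ (i.val + 1) ∧
      ∑ i : Fin n, bval (b i) / 2 ^ (i.val + 1) < 1 := by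
  intro n
  induction n with
  | zero => intro b; simp
  | succ n ih =>
    intro b
    obtain ⟨h1, h2⟩ := ih (fun i => b i.succ)
    have e : ∑ i : Fin (n+1), bval (b i) / 2 ^ (i.val + 1)
        = (bval (b 0) + ∑ i : Fin n, bval (b i.succ) / 2 ^ (i.val + 1)) / 2 := by
      rw [Fin.sum_univ_succ, add_div, Finset.sum_div]
      simp only [Fin.val_zero, Fin.val_succ, zero_add, pow_one, pow_succ (2:ℝ) (_ + 1), div_div]
    rw [e]
    have h3 : bval (b 0) = 0 ∨ bval (b 0) = 1 := by unfold bval; split_ifs <;> simp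
    rcases h3 with h | h <;> rw [h] <;> constructor <;> linarith

lemma aux_digits : ∀ (j n : ℕ) (b b' : Fin n → Bool) (m : ℤ),
    (m : ℝ) ≤ 2 ^ j * ∑ i : Fin n, bval (b i) / 2 ^ (i.val + 1) →
    2 ^ j * ∑ i : Fin n, bval (b i) / 2 ^ (i.val + 1) < (m : ℝ) + 1 →
    (m : ℝ) ≤ 2 ^ j * ∑ i : Fin n, bval (b' i) / 2 ^ (i.val + 1) →
    2 ^ j * ∑ i : Fin n, bval (b' i) / 2 ^ (i.val + 1) < (m : ℝ) + 1 →
    ∀ i : Fin n, i.val < j → b i = b' i := by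
  intro j
  induction j with
  | zero => intro n b b' m _ _ _ _ i hi; omega
  | succ j ih =>
    intro n b b' m h1 h2 h3 h4 i hi
    cases n with
    | zero => exact i.elim0
    | succ n =>
      have e : ∀ b : Fin (n+1) → Bool, ∑ i : Fin (n+1), bval (b i) / 2 ^ (i.val + 1)
          = (bval (b 0) + ∑ i : Fin n, bval (b i.succ) / 2 ^ (i.val + 1)) / 2 := by
        intro b
        rw [Fin.sum_univ_succ, add_div, Finset.sum_div]
        simp only [Fin.val_zero, Fin.val_succ, zero_add, pow_one, pow_succ (2:ℝ) (_ + 1), div_div]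
      rw [e] at h1 h2 h3 h4
      obtain ⟨p1, p2⟩ := aux_Y_bounds n (fun i => b i.succ)
      obtain ⟨q1, q2⟩ := aux_Y_bounds n (fun i => b' i.succ)
      have ihs := ih n (fun i => b i.succ) (fun i => b' i.succ)
      generalize ∑ i : Fin n, bval (b i.succ) / 2 ^ (i.val + 1) = Y at *
      generalize ∑ i : Fin n, bval (b' i.succ) / 2 ^ (i.val + 1) = Y' at *
      have hp : (0:ℝ) < 2 ^ j := by positivity
      rw [pow_succ] at h1 h2 h3 h4
      have r1 : (0:ℝ) ≤ 2 ^ j * Y := by positivity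
      have r2 : (2:ℝ) ^ j * Y < 2 ^ j := by nlinarith
      have r3 : (0:ℝ) ≤ 2 ^ j * Y' := by positivity
      have r4 : (2:ℝ) ^ j * Y' < 2 ^ j := by nlinarith
      have key : ∀ (c c' : Bool) (Z Z' : ℝ), 2 ^ j * Z < 2 ^ j → 0 ≤ 2 ^ j * Z' →
          (m:ℝ) ≤ 2 ^ j * 2 * ((bval c' + Z') / 2) →
          2 ^ j * 2 * ((bval c' + Z') / 2) < m + 1 →
          (m:ℝ) ≤ 2 ^ j * 2 * ((bval c + Z) / 2) → c = false → c' = true → False := by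
        intro c c' Z Z' z1 z2 z3 z4 z5 hc hc'
        subst hc hc'
        simp only [bval, if_true, Bool.false_eq_true, if_false] at z3 z4 z5
        have a1 : (m:ℝ) < 2 ^ j := by nlinarith
        have a2 : (2:ℝ) ^ j < m + 1 := by nlinarith
        have a1' : m < 2 ^ j := by exact_mod_cast a1
        have a2' : 2 ^ j < m + 1 := by exact_mod_cast a2
        omega
      have h0 : b 0 = b' 0 := by
        cases hb : b 0 <;> cases hb' : b' 0
        · rfl
        · exact (key _ _ Y Y' r2 r3 h3 h4 h1 hb hb').elim
        · exact (key _ _ Y' Y r4 r1 h1 h2 h3 hb' hb).elim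
        · rfl
      refine Fin.cases (motive := fun i => i.val < j + 1 → b i = b' i) (fun _ => h0) ?_ i hi
      intro i hi
      simp only [Fin.val_succ] at hi
      rw [← h0] at h3 h4
      cases hb : b 0 <;> rw [hb] at h1 h2 h3 h4 <;>
        simp only [bval, if_true, Bool.false_eq_true, if_false] at h1 h2 h3 h4
      · refine ihs m ?_ ?_ ?_ ?_ i (by omega) <;> linarith
      · refine ihs (m - 2 ^ j) ?_ ?_ ?_ ?_ i (by omega) <;> push_cast <;> linarith

lemma aux_x_eq (n : ℕ) (t : Fin n → Bool) :
    ∑ i : Fin n, bval (t i) / 2 ^ (n - i.val)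
      = ∑ i : Fin n, bval (t i.rev) / 2 ^ (i.val + 1) := by
  rw [← Equiv.sum_comp Fin.revPerm]
  apply Finset.sum_congr rfl
  intro i _
  simp only [Fin.revPerm_apply, Fin.val_rev]
  congr 2
  omega

/-- one-dim Haar data -/
lemma aux_haar_eq (j m : ℕ) (x : ℝ) :
    haar1 (j : ℤ) m x =
      (Set.Ico ((2 * m : ℝ) / 2 ^ (j + 1)) ((2 * m + 1 : ℝ) / 2 ^ (j + 1))).indicator 1 x
      - (Set.Ico ((2 * m + 1 : ℝ) / 2 ^ (j + 1)) ((2 * m + 2 : ℝ) / 2 ^ (j + 1))).indicator 1 x := by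
  have hj : (j : ℤ) ≠ -1 := by omega
  unfold haar1
  rw [if_neg hj]
  simp only [Int.toNat_natCast, Set.indicator, Set.mem_Ico, Pi.one_apply]
  split_ifs <;> first | (exfalso; linarith) | (norm_num; done)

lemma aux_meas (j m : ℕ) : Measurable (haar1 (j : ℤ) m) := by
  have : haar1 (j : ℤ) m = fun x => _ := funext (aux_haar_eq j m)
  rw [this]
  exact (measurable_one.indicator measurableSet_Ico).sub
    (measurable_one.indicator measurableSet_Ico)

lemma aux_abs (j m : ℕ) (x : ℝ) : |haar1 (j : ℤ) m x| ≤ 1 := by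
  unfold haar1
  split_ifs <;> norm_num

lemma aux_sub (j m : ℕ) (hm : m < 2 ^ j) : (0:ℝ) ≤ (2 * m : ℝ) / 2 ^ (j + 1) ∧
    (2 * m + 2 : ℝ) / 2 ^ (j + 1) ≤ 1 := by
  constructor
  · positivity
  · rw [div_le_one (by positivity), pow_succ]
    have : (m:ℝ) + 1 ≤ 2 ^ j := by exact_mod_cast hm
    linarith

lemma aux_int_ind (z a c : ℝ) (h0 : 0 ≤ a) (h1 : c ≤ 1) :
    ∫ x in Set.Icc (0:ℝ) 1, (Set.Ioi z).indicator (1 : ℝ → ℝ) x * (Set.Ico a c).indicator 1 x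
      = max (c - max a z) 0 := by
  have e : (fun x => (Set.Ioi z).indicator (1 : ℝ → ℝ) x * (Set.Ico a c).indicator 1 x)
      = (Set.Ioi z ∩ Set.Ico a c).indicator 1 := by
    rw [Set.inter_indicator_one]; rfl
  rw [e, integral_indicator_one (measurableSet_Ioi.inter measurableSet_Ico),
    measureReal_restrict_apply (measurableSet_Ioi.inter measurableSet_Ico)]
  have e2 : Set.Ioi z ∩ Set.Ico a c ∩ Set.Icc 0 1 = Set.Ioi z ∩ Set.Ico a c := by
    apply Set.inter_eq_left.2
    rintro x ⟨_, h2, h3⟩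
    exact ⟨by linarith, by linarith⟩
  rw [e2]
  have e3 : volume.real (Set.Ioi z ∩ Set.Ico a c) = volume.real (Set.Ico (max a z) c) := by
    apply measureReal_congr
    have : (Set.Ioi z ∩ Set.Ico a c : Set ℝ) =ᵐ[volume] (Set.Ici z ∩ Set.Ico a c : Set ℝ) :=
      Ioi_ae_eq_Ici.inter (ae_eq_refl _)
    have e4 : Set.Ici z ∩ Set.Ico a c = Set.Ico (max a z) c := ?_
    · rw [e4] at this; exact this
    ext x
    simp only [Set.mem_inter_iff, Set.mem_Ici, Set.mem_Ico, max_le_iff]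
    tauto
  rw [e3, Real.volume_real_Ico]

lemma aux_A (j m : ℕ) (hm : m < 2 ^ j) (z : ℝ) :
    ∫ x in Set.Icc (0:ℝ) 1, (Set.Ioi z).indicator (1 : ℝ → ℝ) x * haar1 (j:ℤ) m x
     = max ((2 * m + 1 : ℝ) / 2 ^ (j + 1) - max ((2 * m : ℝ) / 2 ^ (j + 1)) z) 0
      - max ((2 * m + 2 : ℝ) / 2 ^ (j + 1) - max ((2 * m + 1 : ℝ) / 2 ^ (j + 1)) z) 0 := by
  obtain ⟨h0, h1⟩ := aux_sub j m hm
  have hd : (0:ℝ) < 1 / 2 ^ (j+1) := by positivity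
  have e1 : (2 * m + 1 : ℝ) / 2 ^ (j + 1) = (2 * m : ℝ) / 2 ^ (j + 1) + 1 / 2 ^ (j+1) := by ring
  have e2 : (2 * m + 2 : ℝ) / 2 ^ (j + 1) = (2 * m : ℝ) / 2 ^ (j + 1) + 2 * (1 / 2 ^ (j+1)) := by
    ring
  have hi : ∀ a c : ℝ, Integrable (fun x => (Set.Ioi z).indicator (1 : ℝ → ℝ) x *
      (Set.Ico a c).indicator 1 x) (volume.restrict (Set.Icc (0:ℝ) 1)) := by
    intro a c
    have e : (fun x => (Set.Ioi z).indicator (1 : ℝ → ℝ) x * (Set.Ico a c).indicator 1 x)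
        = (Set.Ioi z ∩ Set.Ico a c).indicator 1 := by
      rw [Set.inter_indicator_one]; rfl
    rw [e]
    exact (integrable_const (1:ℝ)).indicator (measurableSet_Ioi.inter measurableSet_Ico)
  simp only [aux_haar_eq, mul_sub]
  rw [integral_sub (hi _ _) (hi _ _), aux_int_ind _ _ _ h0 (by linarith),
    aux_int_ind _ _ _ (by linarith) h1]

lemma aux_A_bounds (j m : ℕ) (hm : m < 2 ^ j) (z : ℝ) :
    (∫ x in Set.Icc (0:ℝ) 1, (Set.Ioi z).indicator (1 : ℝ → ℝ) x * haar1 (j:ℤ) m x) ≤ 0 ∧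
    -(1 / 2 ^ (j+1)) ≤
      (∫ x in Set.Icc (0:ℝ) 1, (Set.Ioi z).indicator (1 : ℝ → ℝ) x * haar1 (j:ℤ) m x) ∧
    (¬ ((m:ℝ) ≤ 2 ^ j * z ∧ 2 ^ j * z < m + 1) →
      (∫ x in Set.Icc (0:ℝ) 1, (Set.Ioi z).indicator (1 : ℝ → ℝ) x * haar1 (j:ℤ) m x) = 0) := by
  rw [aux_A j m hm]
  have hd : (0:ℝ) < 1 / 2 ^ (j+1) := by positivity
  have e1 : (2 * m + 1 : ℝ) / 2 ^ (j + 1) = (2 * m : ℝ) / 2 ^ (j + 1) + 1 / 2 ^ (j+1) := by ring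
  have e2 : (2 * m + 2 : ℝ) / 2 ^ (j + 1) = (2 * m : ℝ) / 2 ^ (j + 1) + 2 * (1 / 2 ^ (j+1)) := by
    ring
  have e3 : (m:ℝ) ≤ 2 ^ j * z ↔ (2 * m : ℝ) / 2 ^ (j + 1) ≤ z := by
    rw [div_le_iff₀ (by positivity), pow_succ]; constructor <;> intro h <;> linarith
  have e4 : 2 ^ j * z < m + 1 ↔ z < (2 * m + 2 : ℝ) / 2 ^ (j + 1) := by
    rw [lt_div_iff₀ (by positivity), pow_succ]; constructor <;> intro h <;> linarith
  rw [e3, e4, e1, e2]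
  generalize (2 * m : ℝ) / 2 ^ (j + 1) = a
  generalize (1:ℝ) / 2 ^ (j+1) = d at *
  refine ⟨?_, ?_, ?_⟩
  · simp only [max_def]; split_ifs <;> linarith
  · simp only [max_def]; split_ifs <;> linarith
  · intro h
    rw [not_and_or, not_le, not_lt] at h
    rcases h with h | h
    · simp only [max_def]; split_ifs <;> linarith
    · simp only [max_def]; split_ifs <;> linarith

lemma aux_lin_ind (a c : ℝ) (h0 : 0 ≤ a) (hac : a ≤ c) (h1 : c ≤ 1) :
    ∫ x in Set.Icc (0:ℝ) 1, x * (Set.Ico a c).indicator 1 x = (c^2 - a^2) / 2 := by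
  have e : (fun x : ℝ => x * (Set.Ico a c).indicator 1 x) = (Set.Ico a c).indicator (fun x => x) := by
    ext x; simp [Set.indicator]
  rw [e, setIntegral_indicator measurableSet_Ico]
  have e2 : Set.Icc 0 1 ∩ Set.Ico a c = Set.Ico a c := by
    apply Set.inter_eq_right.2
    rintro x ⟨h2, h3⟩
    exact ⟨by linarith, by linarith⟩
  rw [e2, integral_Ico_eq_integral_Ioc, ← intervalIntegral.integral_of_le hac, integral_id]

lemma aux_lin (j m : ℕ) (hm : m < 2 ^ j) :
    ∫ x in Set.Icc (0:ℝ) 1, x * haar1 (j:ℤ) m x = - (1 / 2 ^ (j+1)) ^ 2 := by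
  obtain ⟨h0, h1⟩ := aux_sub j m hm
  have hd : (0:ℝ) < 1 / 2 ^ (j+1) := by positivity
  have e1 : (2 * m + 1 : ℝ) / 2 ^ (j + 1) = (2 * m : ℝ) / 2 ^ (j + 1) + 1 / 2 ^ (j+1) := by ring
  have e2 : (2 * m + 2 : ℝ) / 2 ^ (j + 1) = (2 * m : ℝ) / 2 ^ (j + 1) + 2 * (1 / 2 ^ (j+1)) := by
    ring
  have hi : ∀ a c : ℝ, Integrable (fun x : ℝ => x *
      (Set.Ico a c).indicator 1 x) (volume.restrict (Set.Icc (0:ℝ) 1)) := by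
    intro a c
    have e : (fun x : ℝ => x * (Set.Ico a c).indicator 1 x)
        = (Set.Ico a c).indicator (fun x => x) := by
      ext x; simp [Set.indicator]
    rw [e]
    exact (continuous_id.integrableOn_Icc).indicator measurableSet_Ico
  simp only [aux_haar_eq, mul_sub]
  rw [integral_sub (hi _ _) (hi _ _), aux_lin_ind _ _ h0 (by linarith) (by linarith),
    aux_lin_ind _ _ (by linarith) (by linarith) h1, e1, e2]
  ring

lemma aux_int1 (j m : ℕ) (z : ℝ) :
    Integrable (fun x => (Set.Ioi z).indicator (1 : ℝ → ℝ) x * haar1 (j:ℤ) m x)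
      (volume.restrict (Set.Icc (0:ℝ) 1)) := by
  refine Integrable.of_bound (C := 1) ?_ ?_
  · exact ((measurable_one.indicator measurableSet_Ioi).mul (aux_meas j m)).aestronglyMeasurable
  · refine Filter.Eventually.of_forall fun x => ?_
    rw [Real.norm_eq_abs, abs_mul]
    refine mul_le_one₀ ?_ (abs_nonneg _) (aux_abs j m x)
    simp only [Set.indicator, Pi.one_apply]; split_ifs <;> norm_num

lemma aux_int2 (j m : ℕ) :
    Integrable (fun x => x * haar1 (j:ℤ) m x)
      (volume.restrict (Set.Icc (0:ℝ) 1)) := by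
  refine Integrable.of_bound (C := 1) ?_ ?_
  · exact (measurable_id.mul (aux_meas j m)).aestronglyMeasurable
  · refine (ae_restrict_mem measurableSet_Icc).mono fun x hx => ?_
    rw [Real.norm_eq_abs, abs_mul]
    refine mul_le_one₀ ?_ (abs_nonneg _) (aux_abs j m x)
    rw [abs_le]; exact ⟨by linarith [hx.1], hx.2⟩

lemma aux_coeff {ι : Type*} [Fintype ι] (P : ι → ℝ × ℝ) (hP : ∀ k, 0 ≤ (P k).1 ∧ 0 ≤ (P k).2)
    (j1 j2 m1 m2 : ℕ) (hm1 : m1 < 2 ^ j1) (hm2 : m2 < 2 ^ j2) :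
    haarCoeff P ((j1:ℤ), (j2:ℤ)) (m1, m2) =
      (∑ k, (∫ x in Set.Icc (0:ℝ) 1, (Set.Ioi (P k).1).indicator (1 : ℝ → ℝ) x * haar1 (j1:ℤ) m1 x)
        * (∫ x in Set.Icc (0:ℝ) 1, (Set.Ioi (P k).2).indicator (1 : ℝ → ℝ) x * haar1 (j2:ℤ) m2 x))
        / (Fintype.card ι)
      - (1 / 2 ^ (j1+1)) ^ 2 * (1 / 2 ^ (j2+1)) ^ 2 := by
  have hμ : (volume : Measure (ℝ × ℝ)).restrict (Set.Icc (0 : ℝ × ℝ) 1) =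
      (volume.restrict (Set.Icc (0:ℝ) 1)).prod (volume.restrict (Set.Icc (0:ℝ) 1)) := by
    rw [Measure.prod_restrict, Set.Icc_prod_Icc]; rfl
  have hf : ∀ t : ℝ × ℝ, localDisc P t * haar2 ((j1:ℤ), (j2:ℤ)) (m1, m2) t =
      (∑ k, ((Set.Ioi (P k).1).indicator (1 : ℝ → ℝ) t.1 * haar1 (j1:ℤ) m1 t.1) *
        ((Set.Ioi (P k).2).indicator (1 : ℝ → ℝ) t.2 * haar1 (j2:ℤ) m2 t.2)) / (Fintype.card ι)
      - (t.1 * haar1 (j1:ℤ) m1 t.1) * (t.2 * haar1 (j2:ℤ) m2 t.2) := by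
    intro t
    have hc : (countIn P t : ℝ) = ∑ k, (Set.Ioi (P k).1).indicator (1 : ℝ → ℝ) t.1 *
        (Set.Ioi (P k).2).indicator (1 : ℝ → ℝ) t.2 := by
      unfold countIn
      rw [Finset.card_filter]
      push_cast
      apply Finset.sum_congr rfl
      intro k _
      simp only [Set.indicator, Set.mem_Ioi, Pi.one_apply, (hP k).1, (hP k).2, true_and]
      split_ifs <;> first | (exfalso; tauto) | (simp; done)
    unfold localDisc haar2
    rw [hc, sub_mul, Finset.sum_div, Finset.sum_div, Finset.sum_mul]
    congr 1
    · apply Finset.sum_congr rfl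
      intro k _
      ring
    · ring
  unfold haarCoeff
  simp only [hf]
  rw [hμ, integral_sub, integral_div, integral_finsetSum]
  · congr 1
    · congr 1
      apply Finset.sum_congr rfl
      intro k _
      exact integral_prod_mul
        (fun x => (Set.Ioi (P k).1).indicator (1 : ℝ → ℝ) x * haar1 (j1:ℤ) m1 x)
        (fun x => (Set.Ioi (P k).2).indicator (1 : ℝ → ℝ) x * haar1 (j2:ℤ) m2 x)
    · rw [integral_prod_mul (fun x => x * haar1 (j1:ℤ) m1 x) (fun x => x * haar1 (j2:ℤ) m2 x),
        aux_lin _ _ hm1, aux_lin _ _ hm2]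
      ring
  · intro k _
    exact (aux_int1 j1 m1 _).mul_prod (aux_int1 j2 m2 _)
  · refine Integrable.div_const ?_ _
    refine integrable_finsetSum _ fun k _ => ?_
    exact (aux_int1 j1 m1 _).mul_prod (aux_int1 j2 m2 _)
  · exact (aux_int2 j1 m1).mul_prod (aux_int2 j2 m2)

/-- Haar coefficients of the local discrepancy of `R_{n,σ}` for `0 ≤ j₁, j₂ ≤ n`
with `j₁ + j₂ ≥ n - 1`: `|μ_{j,m}| ≤ 2^{-(n+j₁+j₂+1)}`. -/
theorem statement5 (n : ℕ) (hn : 0 < n) (σ : Fin n → Bool)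
    (j1 j2 : ℕ) (hj1 : j1 ≤ n) (hj2 : j2 ≤ n) (hj : n ≤ j1 + j2 + 1)
    (m1 m2 : ℕ) (hm1 : m1 < 2 ^ j1) (hm2 : m2 < 2 ^ j2) :
    |haarCoeff (hammersleyShifted n σ) ((j1 : ℤ), (j2 : ℤ)) (m1, m2)| ≤
      1 / 2 ^ (n + j1 + j2 + 1) := by
  have hP : ∀ k, 0 ≤ (hammersleyShifted n σ k).1 ∧ 0 ≤ (hammersleyShifted n σ k).2 := by
    intro k
    unfold hammersleyShifted
    constructor <;> dsimp only <;> exact Finset.sum_nonneg fun i _ => div_nonneg (aux_bval_nonneg _) (by positivity)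
  rw [aux_coeff _ hP _ _ _ _ hm1 hm2]
  set A : ℝ → ℝ := fun z =>
    ∫ x in Set.Icc (0:ℝ) 1, (Set.Ioi z).indicator (1 : ℝ → ℝ) x * haar1 (j1:ℤ) m1 x with hA
  set B : ℝ → ℝ := fun z =>
    ∫ x in Set.Icc (0:ℝ) 1, (Set.Ioi z).indicator (1 : ℝ → ℝ) x * haar1 (j2:ℤ) m2 x with hB
  have hAb := aux_A_bounds j1 m1 hm1
  have hBb := aux_A_bounds j2 m2 hm2
  change ∀ z, A z ≤ 0 ∧ -(1 / 2 ^ (j1+1)) ≤ A z ∧ (_ → A z = 0) at hAb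
  change ∀ z, B z ≤ 0 ∧ -(1 / 2 ^ (j2+1)) ≤ B z ∧ (_ → B z = 0) at hBb
  change |(∑ k, A (hammersleyShifted n σ k).1 * B (hammersleyShifted n σ k).2) /
    (Fintype.card (Fin n → Bool) : ℝ) - _| ≤ _
  clear_value A B
  clear hA hB
  classical
  let S : Finset (Fin n → Bool) := Finset.univ.filter fun k =>
    ((m1:ℝ) ≤ 2 ^ j1 * (hammersleyShifted n σ k).1 ∧ 2 ^ j1 * (hammersleyShifted n σ k).1 < m1 + 1)
    ∧ ((m2:ℝ) ≤ 2 ^ j2 * (hammersleyShifted n σ k).2 ∧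
      2 ^ j2 * (hammersleyShifted n σ k).2 < m2 + 1)
  have hcard : S.card ≤ 2 := by
    have := Finset.card_le_card_of_injOn (s := S) (t := (Finset.univ : Finset Bool))
      (fun k => if h : j2 < n then k ⟨j2, h⟩ else false) (by intro x _; exact Finset.mem_coe.2 (Finset.mem_univ _)) ?_
    · simpa using this
    · intro t ht t' ht' hE
      rw [Finset.mem_coe] at ht ht'
      replace ht := (Finset.mem_filter.1 ht).2
      replace ht' := (Finset.mem_filter.1 ht').2
      simp only [hammersleyShifted] at ht ht'
      obtain ⟨⟨a1, a2⟩, a3, a4⟩ := ht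
      obtain ⟨⟨b1, b2⟩, b3, b4⟩ := ht'
      rw [aux_x_eq] at a1 a2 b1 b2
      have X := aux_digits j1 n (fun i => t i.rev) (fun i => t' i.rev) m1
        (by exact_mod_cast a1) (by exact_mod_cast a2) (by exact_mod_cast b1)
        (by exact_mod_cast b2)
      have Y := aux_digits j2 n (fun i => t i != σ i) (fun i => t' i != σ i) m2
        (by exact_mod_cast a3) (by exact_mod_cast a4) (by exact_mod_cast b3)
        (by exact_mod_cast b4)
      funext i
      rcases lt_trichotomy i.val j2 with h | h | h
      · have := Y i h
        simpa using this
      · have hlt : j2 < n := h ▸ i.isLt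
        simp only [hlt, dif_pos] at hE
        have : i = ⟨j2, hlt⟩ := Fin.ext h
        rw [this]; exact hE
      · have := X i.rev (by rw [Fin.val_rev]; omega)
        simpa using this
  have hd1 : (0:ℝ) < 1 / 2 ^ (j1+1) := by positivity
  have hd2 : (0:ℝ) < 1 / 2 ^ (j2+1) := by positivity
  have hnn : 0 ≤ ∑ k, A (hammersleyShifted n σ k).1 * B (hammersleyShifted n σ k).2 :=
    Finset.sum_nonneg fun k _ => mul_nonneg_of_nonpos_of_nonpos (hAb _).1 (hBb _).1
  have hle : ∑ k, A (hammersleyShifted n σ k).1 * B (hammersleyShifted n σ k).2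
      ≤ 2 * (1 / 2 ^ (j1+1) * (1 / 2 ^ (j2+1))) := by
    have e : ∑ k, A (hammersleyShifted n σ k).1 * B (hammersleyShifted n σ k).2
        = ∑ k ∈ S, A (hammersleyShifted n σ k).1 * B (hammersleyShifted n σ k).2 := by
      symm
      apply Finset.sum_subset (Finset.subset_univ _)
      intro k _ hk
      simp only [S, Finset.mem_filter, Finset.mem_univ, true_and] at hk
      rw [not_and_or] at hk
      rcases hk with hk | hk
      · rw [(hAb _).2.2 hk, zero_mul]
      · rw [(hBb _).2.2 hk, mul_zero]
    rw [e]
    refine (Finset.sum_le_card_nsmul S _ (1 / 2 ^ (j1+1) * (1 / 2 ^ (j2+1))) ?_).trans ?_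
    · intro k _
      obtain ⟨u1, u2, _⟩ := hAb (hammersleyShifted n σ k).1
      obtain ⟨v1, v2, _⟩ := hBb (hammersleyShifted n σ k).2
      rw [← neg_mul_neg]
      exact mul_le_mul (by linarith) (by linarith) (by linarith) hd1.le
    · rw [nsmul_eq_mul]
      have : (S.card : ℝ) ≤ 2 := by exact_mod_cast hcard
      exact mul_le_mul_of_nonneg_right this (by positivity)
  have hN : (Fintype.card (Fin n → Bool) : ℝ) = 2 ^ n := by simp
  rw [hN]
  have hq : (1:ℝ) / 2 ^ (n + j1 + j2 + 1) = 2 * (1 / 2 ^ (j1+1) * (1 / 2 ^ (j2+1))) / 2 ^ n := by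
    field_simp
    ring
  have hr : (1 / 2 ^ (j1+1) : ℝ) ^ 2 * (1 / 2 ^ (j2+1)) ^ 2
      ≤ 2 * (1 / 2 ^ (j1+1) * (1 / 2 ^ (j2+1))) / 2 ^ n := by
    have h1 : (1 / 2 ^ (j1+1) : ℝ) * (1 / 2 ^ (j2+1)) ≤ 1 / 2 ^ n := by
      rw [one_div_mul_one_div, ← pow_add]
      exact one_div_le_one_div_of_le (by positivity) (pow_le_pow_right₀ (by norm_num) (by omega))
    have h2 : (0:ℝ) < 1 / 2 ^ (j1+1) * (1 / 2 ^ (j2+1)) := by positivity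
    have h3 : (0:ℝ) < 1 / 2 ^ n := by positivity
    have h4 : 2 * (1 / 2 ^ (j1+1) * (1 / 2 ^ (j2+1))) / 2 ^ n =
      2 * ((1 / 2 ^ (j1+1) : ℝ) * (1 / 2 ^ (j2+1))) * (1 / 2 ^ n) := by ring
    rw [h4, ← mul_pow]
    nlinarith
  rw [hq, abs_le]
  have h5 := div_le_div_of_nonneg_right hle (by positivity : (0:ℝ) ≤ 2 ^ n)
  have h6 := div_nonneg hnn (by positivity : (0:ℝ) ≤ 2 ^ n)
  have h7 : (0:ℝ) ≤ (1 / 2 ^ (j1+1) : ℝ) ^ 2 * (1 / 2 ^ (j2+1)) ^ 2 := by positivity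
  constructor <;> linarith
end

section
/- Let n ∈ ℕ, σ ∈ {0,1}^n, and let μ_{j,m} be the Haar coefficients of the local discrepancy of the digit shifted Hammersley point set R_{n,σ} with N = 2^n points. If j = (j_1,j_2) with 0 ≤ j_1,j_2 ≤ n and j_1 + j_2 ≥ n − 1, and m ∈ D_j is such that the open interior of the dyadic box I_{j,m} contains no point of R_{n,σ}, then |μ_{j,m}| = 2^{−2(j_1+j_2+2)}. -/
open MeasureTheory

lemma haar1_eq (j m : ℕ) (f : ℝ → ℝ) : (fun x => f x * haar1 (j : ℤ) m x) =
    fun x => (Set.Ico ((2 * m : ℝ) / 2 ^ (j + 1)) ((2 * m + 1 : ℝ) / 2 ^ (j + 1))).indicator f x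
      - (Set.Ico ((2 * m + 1 : ℝ) / 2 ^ (j + 1)) ((2 * m + 2 : ℝ) / 2 ^ (j + 1))).indicator f x := by
  funext x
  have h : ¬ ((j : ℤ) = -1) := by omega
  simp only [haar1, h, if_false, Int.toNat_natCast, Set.indicator, Set.mem_Ico]
  split_ifs with h1 h2 h2
  · exact absurd h1.2 (not_lt.mpr h2.1)
  · simp
  · simp
  · simp

lemma haar1_int (j m : ℕ) (hm : m < 2 ^ j) (f : ℝ → ℝ)
    (hf : IntegrableOn f (Set.Icc 0 1)) :
    IntegrableOn (fun x => f x * haar1 (j : ℤ) m x) (Set.Icc 0 1) ∧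
    ∫ x in Set.Icc (0 : ℝ) 1, f x * haar1 (j : ℤ) m x =
      (∫ x in ((2 * m : ℝ) / 2 ^ (j + 1))..((2 * m + 1 : ℝ) / 2 ^ (j + 1)), f x)
      - ∫ x in ((2 * m + 1 : ℝ) / 2 ^ (j + 1))..((2 * m + 2 : ℝ) / 2 ^ (j + 1)), f x := by
  rw [haar1_eq]
  have hm' : (m : ℝ) + 1 ≤ 2 ^ j := by exact_mod_cast hm
  have h0 : (0 : ℝ) ≤ (2 * m : ℝ) / 2 ^ (j + 1) := by positivity
  have h1 : (2 * m : ℝ) / 2 ^ (j + 1) ≤ (2 * m + 1 : ℝ) / 2 ^ (j + 1) := by gcongr; linarith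
  have h2 : (2 * m + 1 : ℝ) / 2 ^ (j + 1) ≤ (2 * m + 2 : ℝ) / 2 ^ (j + 1) := by gcongr; linarith
  have h3 : (2 * m + 2 : ℝ) / 2 ^ (j + 1) ≤ 1 := by
    rw [div_le_one (by positivity), pow_succ]; linarith
  generalize (2 * m : ℝ) / 2 ^ (j + 1) = a at *
  generalize (2 * m + 1 : ℝ) / 2 ^ (j + 1) = c at *
  generalize (2 * m + 2 : ℝ) / 2 ^ (j + 1) = b at *
  have s1 : Set.Ico a c ⊆ Set.Icc 0 1 := fun x hx => ⟨by linarith [hx.1], by linarith [hx.2]⟩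
  have s2 : Set.Ico c b ⊆ Set.Icc 0 1 := fun x hx => ⟨by linarith [hx.1], by linarith [hx.2]⟩
  have i1 : IntegrableOn ((Set.Ico a c).indicator f) (Set.Icc 0 1) :=
    Integrable.indicator hf measurableSet_Ico
  have i2 : IntegrableOn ((Set.Ico c b).indicator f) (Set.Icc 0 1) :=
    Integrable.indicator hf measurableSet_Ico
  refine ⟨i1.sub i2, ?_⟩
  rw [integral_sub i1 i2, setIntegral_indicator measurableSet_Ico,
    setIntegral_indicator measurableSet_Ico, Set.inter_eq_self_of_subset_right s1,
    Set.inter_eq_self_of_subset_right s2, intervalIntegral.integral_of_le h1,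
    intervalIntegral.integral_of_le h2, integral_Ico_eq_integral_Ioc,
    integral_Ico_eq_integral_Ioc]

lemma haar1_id (j m : ℕ) (hm : m < 2 ^ j) :
    ∫ x in Set.Icc (0 : ℝ) 1, x * haar1 (j : ℤ) m x = - (1 / 2 ^ (2 * (j + 1))) := by
  rw [(haar1_int j m hm (fun x => x) (continuous_id.integrableOn_Icc)).2]
  simp only [integral_id]
  rw [pow_mul' (2 : ℝ) 2]
  field_simp
  ring

noncomputable def stepf (z x : ℝ) : ℝ := if z < x then 1 else 0

lemma stepf_int (z : ℝ) : IntegrableOn (stepf z) (Set.Icc 0 1) := by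
  have : stepf z = (Set.Ioi z).indicator (fun _ => 1) := by
    funext x; simp [stepf, Set.indicator]
  rw [this]
  exact Integrable.indicator (continuous_const.integrableOn_Icc) measurableSet_Ioi

lemma haar1_step (j m : ℕ) (hm : m < 2 ^ j) (z : ℝ)
    (hz : z ∉ Set.Ioo ((m : ℝ) / 2 ^ j) ((m + 1 : ℝ) / 2 ^ j)) :
    ∫ x in Set.Icc (0 : ℝ) 1, stepf z x * haar1 (j : ℤ) m x = 0 := by
  rw [(haar1_int j m hm (stepf z) (stepf_int z)).2]
  have ea : (m : ℝ) / 2 ^ j = (2 * m : ℝ) / 2 ^ (j + 1) := by field_simp; ring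
  have eb : (m + 1 : ℝ) / 2 ^ j = (2 * m + 2 : ℝ) / 2 ^ (j + 1) := by field_simp; ring
  rw [ea, eb] at hz
  have h1 : (2 * m : ℝ) / 2 ^ (j + 1) ≤ (2 * m + 1 : ℝ) / 2 ^ (j + 1) := by gcongr; linarith
  have h2 : (2 * m + 1 : ℝ) / 2 ^ (j + 1) ≤ (2 * m + 2 : ℝ) / 2 ^ (j + 1) := by gcongr; linarith
  have h3 : (2 * m + 1 : ℝ) / 2 ^ (j + 1) - (2 * m : ℝ) / 2 ^ (j + 1) =
    (2 * m + 2 : ℝ) / 2 ^ (j + 1) - (2 * m + 1 : ℝ) / 2 ^ (j + 1) := by ring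
  clear ea eb
  generalize (2 * m : ℝ) / 2 ^ (j + 1) = a at *
  generalize (2 * m + 1 : ℝ) / 2 ^ (j + 1) = c at *
  generalize (2 * m + 2 : ℝ) / 2 ^ (j + 1) = b at *
  rw [intervalIntegral.integral_of_le h1, intervalIntegral.integral_of_le h2]
  by_cases hza : z ≤ a
  · rw [setIntegral_congr_fun (g := fun _ => (1 : ℝ)) measurableSet_Ioc,
      setIntegral_congr_fun (s := Set.Ioc c b) (g := fun _ => (1 : ℝ)) measurableSet_Ioc]
    · rw [← intervalIntegral.integral_of_le h1, ← intervalIntegral.integral_of_le h2]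
      simp [h3]
    · intro x hx
      have : z < x := by linarith [hx.1]
      simp [stepf, this]
    · intro x hx
      have : z < x := by linarith [hx.1]
      simp [stepf, this]
  · have hb : b ≤ z := by
      by_contra hb
      exact hz ⟨not_le.mp hza, not_le.mp hb⟩
    rw [setIntegral_congr_fun (g := fun _ => (0 : ℝ)) measurableSet_Ioc,
      setIntegral_congr_fun (s := Set.Ioc c b) (g := fun _ => (0 : ℝ)) measurableSet_Ioc]
    · simp
    · intro x hx
      have : ¬ z < x := by linarith [hx.2]
      simp [stepf, this]
    · intro x hx
      have : ¬ z < x := by linarith [hx.2]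
      simp [stepf, this]

lemma prod_int (f g : ℝ → ℝ) (hf : IntegrableOn f (Set.Icc 0 1))
    (hg : IntegrableOn g (Set.Icc 0 1)) :
    IntegrableOn (fun t : ℝ × ℝ => f t.1 * g t.2) (Set.Icc (0 : ℝ × ℝ) 1) ∧
    ∫ t in Set.Icc (0 : ℝ × ℝ) 1, f t.1 * g t.2 =
      (∫ x in Set.Icc (0 : ℝ) 1, f x) * ∫ x in Set.Icc (0 : ℝ) 1, g x := by
  have e : Set.Icc (0 : ℝ × ℝ) 1 = Set.Icc (0 : ℝ) 1 ×ˢ Set.Icc (0 : ℝ) 1 := by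
    rw [Set.Icc_prod_Icc]; rfl
  rw [e, Measure.volume_eq_prod]
  refine ⟨?_, setIntegral_prod_mul f g _ _⟩
  rw [IntegrableOn, ← Measure.prod_restrict]
  exact Integrable.mul_prod hf hg

lemma coeff_gen {ι : Type*} [Fintype ι] (P : ι → ℝ × ℝ) (j1 j2 m1 m2 : ℕ)
    (hm1 : m1 < 2 ^ j1) (hm2 : m2 < 2 ^ j2)
    (hempty : ∀ t, P t ∉
        Set.Ioo ((m1 : ℝ) / 2 ^ j1) ((m1 + 1 : ℝ) / 2 ^ j1) ×ˢ
          Set.Ioo ((m2 : ℝ) / 2 ^ j2) ((m2 + 1 : ℝ) / 2 ^ j2)) :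
    haarCoeff P ((j1 : ℤ), (j2 : ℤ)) (m1, m2) =
      - (1 / 2 ^ (2 * (j1 + j2 + 2))) := by
  classical
  have hi : ∀ k, _ := fun k => prod_int _ _
    (haar1_int j1 m1 hm1 _ (stepf_int (P k).1)).1 (haar1_int j2 m2 hm2 _ (stepf_int (P k).2)).1
  have hl := prod_int _ _
    (haar1_int j1 m1 hm1 (fun x => x) (continuous_id.integrableOn_Icc)).1
    (haar1_int j2 m2 hm2 (fun x => x) (continuous_id.integrableOn_Icc)).1
  let c : ι → ℝ := fun k => (if 0 ≤ (P k).1 ∧ 0 ≤ (P k).2 then 1 else 0) / (Fintype.card ι : ℝ)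
  have key : ∀ t : ℝ × ℝ, localDisc P t * haar2 ((j1 : ℤ), (j2 : ℤ)) (m1, m2) t =
      (∑ k, c k * ((stepf (P k).1 t.1 * haar1 (j1 : ℤ) m1 t.1) *
        (stepf (P k).2 t.2 * haar1 (j2 : ℤ) m2 t.2))) -
      (t.1 * haar1 (j1 : ℤ) m1 t.1) * (t.2 * haar1 (j2 : ℤ) m2 t.2) := by
    intro t
    have hc : (countIn P t : ℝ) / (Fintype.card ι) =
        ∑ k, c k * (stepf (P k).1 t.1 * stepf (P k).2 t.2) := by
      rw [countIn, Finset.card_filter, Nat.cast_sum, Finset.sum_div]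
      refine Finset.sum_congr rfl fun k _ => ?_
      simp only [c, stepf]
      by_cases a1 : 0 ≤ (P k).1 <;> by_cases a2 : 0 ≤ (P k).2 <;>
        by_cases a3 : (P k).1 < t.1 <;> by_cases a4 : (P k).2 < t.2 <;> simp [a1, a2, a3, a4]
    rw [localDisc, hc, haar2, sub_mul, Finset.sum_mul]
    congr 1
    · exact Finset.sum_congr rfl fun k _ => by ring
    · ring
  rw [haarCoeff]
  simp only [key]
  rw [integral_sub (integrable_finsetSum _ fun k _ => (hi k).1.const_mul (c k)) hl.1,
    integral_finsetSum _ fun k _ => (hi k).1.const_mul (c k), hl.2,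
    haar1_id j1 m1 hm1, haar1_id j2 m2 hm2, Finset.sum_eq_zero]
  · rw [show 2 * (j1 + j2 + 2) = 2 * (j1 + 1) + 2 * (j2 + 1) by ring, pow_add]
    field_simp
    ring
  · intro k _
    rw [integral_const_mul, (hi k).2]
    by_cases h : (P k).1 ∈ Set.Ioo ((m1 : ℝ) / 2 ^ j1) ((m1 + 1 : ℝ) / 2 ^ j1)
    · rw [haar1_step j2 m2 hm2 _ fun h' => hempty k ⟨h, h'⟩]; simp
    · rw [haar1_step j1 m1 hm1 _ h]; simp

/-- Haar coefficients of the local discrepancy of `R_{n,σ}` for `0 ≤ j₁, j₂ ≤ n`,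
`j₁ + j₂ ≥ n - 1`, whenever no point of `R_{n,σ}` lies in the interior of the
dyadic box `I_{j,m}`: `|μ_{j,m}| = 2^{-2(j₁+j₂+2)}`. -/
theorem statement6 (n : ℕ) (hn : 0 < n) (σ : Fin n → Bool)
    (j1 j2 : ℕ) (hj1 : j1 ≤ n) (hj2 : j2 ≤ n) (hj : n ≤ j1 + j2 + 1)
    (m1 m2 : ℕ) (hm1 : m1 < 2 ^ j1) (hm2 : m2 < 2 ^ j2)
    (hempty : ∀ t : Fin n → Bool,
      hammersleyShifted n σ t ∉
        Set.Ioo ((m1 : ℝ) / 2 ^ j1) ((m1 + 1 : ℝ) / 2 ^ j1) ×ˢ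
          Set.Ioo ((m2 : ℝ) / 2 ^ j2) ((m2 + 1 : ℝ) / 2 ^ j2)) :
    |haarCoeff (hammersleyShifted n σ) ((j1 : ℤ), (j2 : ℤ)) (m1, m2)| =
      1 / 2 ^ (2 * (j1 + j2 + 2)) := by
  rw [coeff_gen _ j1 j2 m1 m2 hm1 hm2 hempty, abs_neg, abs_of_nonneg (by positivity)]
end

section
/- Let n ∈ ℕ, σ ∈ {0,1}^n, and let μ_{j,m} be the Haar coefficients of the local discrepancy of the digit shifted Hammersley point set R_{n,σ} with N = 2^n points. If j = (−1,k) or j = (k,−1) with k ∈ ℕ_0 and k ≥ n, then |μ_{j,m}| = 2^{−(2k+3)} for all m ∈ D_j. -/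
open MeasureTheory

lemma haar1_meas (j : ℤ) (m : ℕ) : Measurable (haar1 j m) := by
  unfold haar1
  by_cases hj : j = -1
  · simp only [hj, if_true]
    exact Measurable.ite measurableSet_Ico measurable_const measurable_const
  · simp only [hj, if_false]
    exact Measurable.ite measurableSet_Ico measurable_const
      (Measurable.ite measurableSet_Ico measurable_const measurable_const)

lemma haar1_bdd (j : ℤ) (m : ℕ) (x : ℝ) : |haar1 j m x| ≤ 1 := by
  unfold haar1
  split_ifs <;> simp

lemma step_meas (p : ℝ) : Measurable (fun t : ℝ => if 0 ≤ p ∧ p < t then (1 : ℝ) else 0) := by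
  refine Measurable.ite ?_ measurable_const measurable_const
  by_cases h : 0 ≤ p
  · simp only [h, true_and]
    exact measurableSet_Ioi
  · simp [h]

lemma int_of_bdd (f : ℝ → ℝ) (hf : Measurable f) (hb : ∀ x ∈ Set.Icc (0 : ℝ) 1, |f x| ≤ 1) :
    IntegrableOn f (Set.Icc 0 1) := by
  refine Measure.integrableOn_of_bounded (M := 1) (by simp) hf.aestronglyMeasurable ?_
  filter_upwards [ae_restrict_mem measurableSet_Icc] with x hx
  simpa using hb x hx

lemma stepInt (p : ℝ) (j : ℤ) (m : ℕ) :
    IntegrableOn (fun t : ℝ => (if 0 ≤ p ∧ p < t then (1 : ℝ) else 0) * haar1 j m t)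
      (Set.Icc 0 1) := by
  refine int_of_bdd _ ((step_meas p).mul (haar1_meas j m)) ?_
  intro x _
  have := haar1_bdd j m x
  split_ifs <;> simp [this]

lemma idInt (j : ℤ) (m : ℕ) :
    IntegrableOn (fun t : ℝ => t * haar1 j m t) (Set.Icc 0 1) := by
  refine int_of_bdd _ (measurable_id.mul (haar1_meas j m)) ?_
  intro x hx
  have := haar1_bdd j m x
  rw [abs_mul, abs_of_nonneg hx.1]
  exact mul_le_one₀ hx.2 (abs_nonneg _) this

lemma haarCoeff_eq {ι : Type*} [Fintype ι] (P : ι → ℝ × ℝ) (j : ℤ × ℤ) (m : ℕ × ℕ) :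
    haarCoeff P j m =
      (∑ k, (∫ t in Set.Icc (0 : ℝ) 1, (if 0 ≤ (P k).1 ∧ (P k).1 < t then (1 : ℝ) else 0) *
          haar1 j.1 m.1 t) *
        (∫ t in Set.Icc (0 : ℝ) 1, (if 0 ≤ (P k).2 ∧ (P k).2 < t then (1 : ℝ) else 0) *
          haar1 j.2 m.2 t)) / (Fintype.card ι)
      - (∫ t in Set.Icc (0 : ℝ) 1, t * haar1 j.1 m.1 t) *
        (∫ t in Set.Icc (0 : ℝ) 1, t * haar1 j.2 m.2 t) := by
  have hset : Set.Icc (0 : ℝ × ℝ) 1 = Set.Icc (0 : ℝ) 1 ×ˢ Set.Icc (0 : ℝ) 1 := by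
    rw [Set.Icc_prod_Icc]; rfl
  have hprod : ∀ f g : ℝ → ℝ, IntegrableOn f (Set.Icc 0 1) → IntegrableOn g (Set.Icc 0 1) →
      IntegrableOn (fun t : ℝ × ℝ => f t.1 * g t.2) (Set.Icc (0 : ℝ) 1 ×ˢ Set.Icc (0 : ℝ) 1) := by
    intro f g hf hg
    unfold IntegrableOn
    rw [Measure.volume_eq_prod, ← Measure.prod_restrict]
    exact Integrable.mul_prod hf hg
  unfold haarCoeff
  have hfun : (fun t : ℝ × ℝ => localDisc P t * haar2 j m t) = fun t : ℝ × ℝ =>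
      (∑ k, ((if 0 ≤ (P k).1 ∧ (P k).1 < t.1 then (1 : ℝ) else 0) * haar1 j.1 m.1 t.1) *
        ((if 0 ≤ (P k).2 ∧ (P k).2 < t.2 then (1 : ℝ) else 0) * haar1 j.2 m.2 t.2))
          / (Fintype.card ι)
      - (t.1 * haar1 j.1 m.1 t.1) * (t.2 * haar1 j.2 m.2 t.2) := by
    funext t
    have hc : (countIn P t : ℝ) = ∑ k, (if 0 ≤ (P k).1 ∧ (P k).1 < t.1 then (1 : ℝ) else 0) *
        (if 0 ≤ (P k).2 ∧ (P k).2 < t.2 then (1 : ℝ) else 0) := by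
      unfold countIn
      rw [Finset.card_filter]
      push_cast
      refine Finset.sum_congr rfl fun k _ => ?_
      by_cases h1 : 0 ≤ (P k).1 ∧ (P k).1 < t.1 <;>
        by_cases h2 : 0 ≤ (P k).2 ∧ (P k).2 < t.2 <;>
        simp only [← and_assoc (a := 0 ≤ (P k).1), h1, h2] <;> simp
    unfold localDisc haar2
    rw [hc, sub_mul, div_mul_eq_mul_div, Finset.sum_mul]
    congr 1
    · congr 1
      refine Finset.sum_congr rfl fun k _ => ?_
      ring
    · ring
  rw [hfun, hset]
  rw [integral_sub, integral_div, integral_finsetSum]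
  · simp only [Measure.volume_eq_prod]
    congr 1
    · congr 1
      refine Finset.sum_congr rfl fun k _ => ?_
      exact setIntegral_prod_mul
        (fun t : ℝ => (if 0 ≤ (P k).1 ∧ (P k).1 < t then (1 : ℝ) else 0) * haar1 j.1 m.1 t)
        (fun t : ℝ => (if 0 ≤ (P k).2 ∧ (P k).2 < t then (1 : ℝ) else 0) * haar1 j.2 m.2 t) _ _
    · exact setIntegral_prod_mul (fun t => t * haar1 j.1 m.1 t) (fun t => t * haar1 j.2 m.2 t) _ _
  · intro k _
    exact hprod _ _ (stepInt _ _ _) (stepInt _ _ _)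
  · refine Integrable.div_const (integrable_finsetSum _ fun k _ => ?_) _
    exact hprod _ _ (stepInt _ _ _) (stepInt _ _ _)
  · exact hprod _ _ (idInt _ _) (idInt _ _)

lemma haar_int (k m : ℕ) (hm : m < 2 ^ k) (F : ℝ → ℝ) (hF : IntegrableOn F (Set.Icc 0 1)) :
    ∫ t in Set.Icc (0 : ℝ) 1, F t * haar1 (k : ℤ) m t =
      (∫ t in Set.Ioc ((2 * m : ℝ) / 2 ^ (k + 1)) ((2 * m + 1 : ℝ) / 2 ^ (k + 1)), F t) -
      ∫ t in Set.Ioc ((2 * m + 1 : ℝ) / 2 ^ (k + 1)) ((2 * m + 2 : ℝ) / 2 ^ (k + 1)), F t := by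
  set a := (2 * m : ℝ) / 2 ^ (k + 1) with ha
  set b := (2 * m + 1 : ℝ) / 2 ^ (k + 1) with hb
  set c := (2 * m + 2 : ℝ) / 2 ^ (k + 1) with hc
  have ha0 : 0 ≤ a := by positivity
  have hab : a ≤ b := by rw [ha, hb]; gcongr; linarith
  have hbc : b ≤ c := by rw [hc, hb]; gcongr; linarith
  have hc1 : c ≤ 1 := by
    rw [hc, div_le_one (by positivity), pow_succ]
    have : (m : ℝ) + 1 ≤ 2 ^ k := by exact_mod_cast hm
    linarith
  have hfun : (fun t => F t * haar1 (k : ℤ) m t) =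
      fun t => (Set.Ico a b).indicator F t - (Set.Ico b c).indicator F t := by
    funext t
    have hk : ¬ ((k : ℤ) = -1) := by omega
    unfold haar1
    simp only [hk, if_false, Int.toNat_natCast, ← ha, ← hb, ← hc, Set.indicator, Set.mem_Ico]
    split_ifs <;> first | (exfalso; grind) | simp
  have s1 : Set.Ico a b ⊆ Set.Icc 0 1 := fun x hx =>
    ⟨ha0.trans hx.1, by linarith [hx.2]⟩
  have s2 : Set.Ico b c ⊆ Set.Icc 0 1 := fun x hx =>
    ⟨by linarith [hx.1], by linarith [hx.2]⟩
  rw [hfun, integral_sub (Integrable.indicator hF measurableSet_Ico)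
    (Integrable.indicator hF measurableSet_Ico),
    setIntegral_indicator measurableSet_Ico, setIntegral_indicator measurableSet_Ico,
    Set.inter_eq_self_of_subset_right s1, Set.inter_eq_self_of_subset_right s2,
    integral_Ico_eq_integral_Ioo, integral_Ico_eq_integral_Ioo,
    integral_Ioc_eq_integral_Ioo, integral_Ioc_eq_integral_Ioo]

lemma haar_id (k m : ℕ) (hm : m < 2 ^ k) :
    ∫ t in Set.Icc (0 : ℝ) 1, t * haar1 (k : ℤ) m t = - (1 / 2 ^ (2 * k + 2)) := by
  rw [haar_int k m hm (fun t => t) (continuous_id.integrableOn_Icc),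
    ← intervalIntegral.integral_of_le (by gcongr; linarith),
    ← intervalIntegral.integral_of_le (by gcongr; linarith), integral_id, integral_id]
  rw [show 2 * k + 2 = (k + 1) * 2 by ring, pow_mul]
  field_simp
  ring

lemma haar_id' : ∫ t in Set.Icc (0 : ℝ) 1, t * haar1 (-1) 0 t = 1 / 2 := by
  rw [integral_Icc_eq_integral_Ico,
    setIntegral_congr_fun (g := fun t => t) measurableSet_Ico
      (fun t ht => by simp [haar1, ht.1, ht.2]),
    integral_Ico_eq_integral_Ioo, ← integral_Ioc_eq_integral_Ioo,
    ← intervalIntegral.integral_of_le (by norm_num), integral_id]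
  norm_num

lemma haar_step (k m : ℕ) (hm : m < 2 ^ k) (z : ℕ) (p : ℝ) (hp : p = z / 2 ^ k) :
    ∫ t in Set.Icc (0 : ℝ) 1, (if 0 ≤ p ∧ p < t then (1 : ℝ) else 0) * haar1 (k : ℤ) m t = 0 := by
  rw [haar_int k m hm _ (int_of_bdd _ (step_meas p) (by intro x _; split_ifs <;> simp))]
  have hpz : p = (2 * z) / 2 ^ (k + 1) := by rw [hp, pow_succ]; field_simp
  have hp0 : 0 ≤ p := by rw [hp]; positivity
  have hab : (2 * m : ℝ) / 2 ^ (k + 1) ≤ (2 * m + 1 : ℝ) / 2 ^ (k + 1) := by gcongr; linarith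
  have hbc : (2 * m + 1 : ℝ) / 2 ^ (k + 1) ≤ (2 * m + 2 : ℝ) / 2 ^ (k + 1) := by gcongr; linarith
  obtain ⟨C, hC⟩ : ∃ C : ℝ, ∀ t ∈ Set.Ioc ((2 * m : ℝ) / 2 ^ (k + 1)) ((2 * m + 2 : ℝ) / 2 ^ (k + 1)),
      (if 0 ≤ p ∧ p < t then (1 : ℝ) else 0) = C := by
    rcases le_or_gt z m with h | h
    · refine ⟨1, fun t ht => if_pos ⟨hp0, lt_of_le_of_lt ?_ ht.1⟩⟩
      rw [hpz]; gcongr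
    · refine ⟨0, fun t ht => if_neg fun h' => ?_⟩
      have : (2 * m + 2 : ℝ) / 2 ^ (k + 1) ≤ p := by
        rw [hpz]
        gcongr
        have : (m : ℝ) + 1 ≤ z := by exact_mod_cast h
        linarith
      linarith [ht.2, h'.2]
  rw [setIntegral_congr_fun (g := fun _ => C) measurableSet_Ioc
      (fun t ht => hC t ⟨ht.1, ht.2.trans hbc⟩),
    setIntegral_congr_fun (g := fun _ => C) measurableSet_Ioc
      (fun t ht => hC t ⟨hab.trans_lt ht.1, ht.2⟩),
    ← intervalIntegral.integral_of_le hab, ← intervalIntegral.integral_of_le hbc]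
  simp only [intervalIntegral.integral_const, smul_eq_mul]
  ring

lemma dyadic_sum (n k : ℕ) (b : Fin n → Bool) (e : Fin n → ℕ) (he : ∀ i, e i ≤ k) :
    ∃ z : ℕ, ∑ i : Fin n, bval (b i) / 2 ^ (e i) = (z : ℝ) / 2 ^ k := by
  refine ⟨∑ i, (if b i then 1 else 0) * 2 ^ (k - e i), ?_⟩
  push_cast
  rw [Finset.sum_div]
  refine Finset.sum_congr rfl fun i _ => ?_
  have : (2 : ℝ) ^ k = 2 ^ (k - e i) * 2 ^ e i := by
    rw [← pow_add, Nat.sub_add_cancel (he i)]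
  rw [this]
  unfold bval
  field_simp

/-- Haar coefficients of the local discrepancy of `R_{n,σ}` for `j = (-1,k)` or
`j = (k,-1)` with `k ≥ n`: `|μ_{j,m}| = 2^{-(2k+3)}`. -/
theorem statement9 (n : ℕ) (hn : 0 < n) (σ : Fin n → Bool)
    (k : ℕ) (hk : n ≤ k) (m : ℕ) (hm : m < 2 ^ k) :
    |haarCoeff (hammersleyShifted n σ) (-1, (k : ℤ)) (0, m)| = 1 / 2 ^ (2 * k + 3) ∧
    |haarCoeff (hammersleyShifted n σ) ((k : ℤ), -1) (m, 0)| = 1 / 2 ^ (2 * k + 3) := by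
  have h1 : ∀ t, ∃ z : ℕ, (hammersleyShifted n σ t).1 = (z : ℝ) / 2 ^ k := fun t =>
    dyadic_sum n k t (fun i => n - i.val) (fun i => by omega)
  have h2 : ∀ t, ∃ z : ℕ, (hammersleyShifted n σ t).2 = (z : ℝ) / 2 ^ k := fun t =>
    dyadic_sum n k (fun i => t i != σ i) (fun i => i.val + 1) (fun i => by omega)
  have hpow : (2 : ℝ) ^ (2 * k + 3) = 2 ^ (2 * k + 2) * 2 := by ring
  constructor
  · rw [haarCoeff_eq, Finset.sum_eq_zero]
    · simp only [haar_id k m hm, haar_id']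
      rw [zero_div, zero_sub, mul_neg, neg_neg, abs_of_nonneg (by positivity), hpow]
      field_simp
    · intro t _
      obtain ⟨z, hz⟩ := h2 t
      rw [haar_step k m hm z _ hz, mul_zero]
  · rw [haarCoeff_eq, Finset.sum_eq_zero]
    · simp only [haar_id k m hm, haar_id']
      rw [zero_div, zero_sub, neg_mul, neg_neg, abs_of_nonneg (by positivity), hpow]
      field_simp
    · intro t _
      obtain ⟨z, hz⟩ := h1 t
      rw [haar_step k m hm z _ hz, zero_mul]
end

section
/- Let n ∈ ℕ, σ ∈ {0,1}^n, and N = 2^{n+1}. For every t ∈ [0,1]^2, the local discrepancies of the symmetrized point set R_{n,σ}^{sym} and of the multiset ~R_{n,σ}^{sym} satisfy |D_N(R_{n,σ}^{sym},t) − D_N(~R_{n,σ}^{sym},t)| ≤ 1/2^{n+1}. -/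
open MeasureTheory

lemma S_bounds (n : ℕ) (a : Fin n → Bool) :
    0 ≤ ∑ i : Fin n, bval (a i) / 2 ^ (i.val + 1) ∧
    ∑ i : Fin n, bval (a i) / 2 ^ (i.val + 1) ≤ 1 - 1 / 2 ^ n := by
  have h1 : ∑ i : Fin n, (1:ℝ) / 2 ^ (i.val + 1) = 1 - 1 / 2 ^ n := by
    clear a
    induction n with
    | zero => simp
    | succ n ih =>
      rw [Fin.sum_univ_castSucc]
      simp only [Fin.val_castSucc, Fin.val_last]
      rw [ih]
      field_simp
      ring
  constructor
  · apply Finset.sum_nonneg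
    intro i _
    unfold bval
    split_ifs <;> positivity
  · rw [← h1]
    apply Finset.sum_le_sum
    intro i _
    unfold bval
    split_ifs
    · exact le_refl _
    · rw [zero_div]; positivity

lemma S_succ (n : ℕ) (a : Fin (n+1) → Bool) :
    ∑ i : Fin (n+1), bval (a i) / 2 ^ (i.val + 1) =
      bval (a 0) / 2 + (∑ i : Fin n, bval (a i.succ) / 2 ^ (i.val + 1)) / 2 := by
  rw [Fin.sum_univ_succ, Finset.sum_div]
  congr 1
  · simp
  · apply Finset.sum_congr rfl
    intro i _
    rw [Fin.val_succ, pow_succ _ (i.val+1), div_div]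

lemma S_sep (n : ℕ) (a b : Fin n → Bool)
    (h1 : ∑ i : Fin n, bval (a i) / 2 ^ (i.val + 1) <
      ∑ i : Fin n, bval (b i) / 2 ^ (i.val + 1) + 1 / 2 ^ n)
    (h2 : ∑ i : Fin n, bval (b i) / 2 ^ (i.val + 1) <
      ∑ i : Fin n, bval (a i) / 2 ^ (i.val + 1) + 1 / 2 ^ n) : a = b := by
  induction n with
  | zero => exact Subsingleton.elim _ _
  | succ n ih =>
    rw [S_succ, S_succ] at h1 h2
    have ea := S_bounds n (fun i => a i.succ)
    have eb := S_bounds n (fun i => b i.succ)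
    have hp : (1:ℝ) / 2 ^ (n+1) = 1 / 2 ^ n / 2 := by rw [pow_succ, div_div]
    rw [hp] at h1 h2
    have h0 : a 0 = b 0 := by
      have bt : bval true = 1 := by simp [bval]
      have bf : bval false = 0 := by simp [bval]
      cases ha : a 0 <;> cases hb : b 0
      · rfl
      · rw [ha, hb, bt, bf] at h1 h2
        linarith
      · rw [ha, hb, bt, bf] at h1 h2
        linarith
      · rfl
    rw [h0] at h1 h2
    have := ih (fun i => a i.succ) (fun i => b i.succ) (by linarith) (by linarith)
    funext i
    refine Fin.cases h0 (fun j => congrFun this j) i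

lemma S_compl (n : ℕ) (σ t : Fin n → Bool) :
    (hammersleyShifted n σ t).2 = 1 - 1 / 2 ^ n - (hammersleyShifted n (fun i => !(σ i)) t).2 := by
  have h1 : ∑ i : Fin n, (1:ℝ) / 2 ^ (i.val + 1) = 1 - 1 / 2 ^ n := by
    clear σ t
    induction n with
    | zero => simp
    | succ n ih =>
      rw [Fin.sum_univ_castSucc]
      simp only [Fin.val_castSucc, Fin.val_last]
      rw [ih]
      field_simp
      ring
  rw [← h1]
  simp only [hammersleyShifted]
  rw [← Finset.sum_sub_distrib]
  apply Finset.sum_congr rfl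
  intro i _
  cases t i <;> cases σ i <;> simp [bval]

lemma count_split {X : Type*} [Fintype X] (P : Bool × X → ℝ × ℝ) (t : ℝ × ℝ) :
    countIn P t = countIn (fun x => P (true, x)) t + countIn (fun x => P (false, x)) t := by
  unfold countIn
  simp only [Finset.card_filter]
  rw [Fintype.sum_prod_type, Fintype.sum_bool]

/-- The local discrepancies of `R_{n,σ}^{sym}` and of the multiset `~R_{n,σ}^{sym}`
differ pointwise by at most `2^{-(n+1)}`. -/
theorem statement17 (n : ℕ) (hn : 0 < n) (σ : Fin n → Bool)
    (t : ℝ × ℝ) (ht : t ∈ Set.Icc (0 : ℝ × ℝ) 1) :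
    |localDisc (hammersleySym n σ) t - localDisc (hammersleySymTilde n σ) t| ≤
      1 / 2 ^ (n + 1) := by
  have key : |(countIn (hammersleySym n σ) t : ℝ) - countIn (hammersleySymTilde n σ) t| ≤ 1 := by
    rw [count_split, count_split]
    simp only [hammersleySym, hammersleySymTilde, if_true, Bool.false_eq_true, if_false]
    set τ : Fin n → Bool := fun i => !(σ i) with hτ
    have hp : (0:ℝ) < 1 / 2 ^ n := by positivity
    have hle : countIn (fun x => ((hammersleyShifted n σ x).1, 1 - (hammersleyShifted n σ x).2)) t
        ≤ countIn (fun x => hammersleyShifted n τ x) t := by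
      apply Finset.card_le_card
      intro x
      simp only [Finset.mem_filter, Finset.mem_univ, true_and]
      rintro ⟨h1, h2, h3, h4⟩
      have hb := (S_bounds n (fun i => (x i != τ i))).1
      rw [S_compl] at h4
      exact ⟨h1, h2, hb, by linarith⟩
    have hge : countIn (fun x => hammersleyShifted n τ x) t ≤
        countIn (fun x => ((hammersleyShifted n σ x).1, 1 - (hammersleyShifted n σ x).2)) t + 1 := by
      unfold countIn
      rw [← Nat.sub_le_iff_le_add']
      refine (Finset.le_card_sdiff _ _).trans ?_
      rw [Finset.card_le_one]
      have hmem : ∀ x, x ∈ (Finset.univ.filter (fun k => 0 ≤ (hammersleyShifted n τ k).1 ∧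
          (hammersleyShifted n τ k).1 < t.1 ∧ 0 ≤ (hammersleyShifted n τ k).2 ∧
          (hammersleyShifted n τ k).2 < t.2)) \ (Finset.univ.filter (fun k =>
          0 ≤ (hammersleyShifted n σ k).1 ∧
          (hammersleyShifted n σ k).1 < t.1 ∧ 0 ≤ 1 - (hammersleyShifted n σ k).2 ∧
          1 - (hammersleyShifted n σ k).2 < t.2)) → (hammersleyShifted n τ x).2 < t.2 ∧
          t.2 ≤ (hammersleyShifted n τ x).2 + 1 / 2 ^ n := by
        intro x hx
        simp only [Finset.mem_sdiff, Finset.mem_filter, Finset.mem_univ, true_and] at hx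
        obtain ⟨⟨h1, h2, h3, h4⟩, h5⟩ := hx
        refine ⟨h4, ?_⟩
        by_contra hc
        have e := S_compl n σ x
        exact h5 ⟨h1, h2, by linarith, by linarith⟩
      intro a ha b hb
      obtain ⟨a1, a2⟩ := hmem a ha
      obtain ⟨b1, b2⟩ := hmem b hb
      have := S_sep n (fun i => (a i != τ i)) (fun i => (b i != τ i))
        (lt_of_lt_of_le a1 b2) (lt_of_lt_of_le b1 a2)
      funext i
      have := congrFun this i
      revert this
      cases a i <;> cases b i <;> cases τ i <;> simp
    have hle' : (countIn (fun x => ((hammersleyShifted n σ x).1,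
      1 - (hammersleyShifted n σ x).2)) t : ℝ) ≤ countIn (fun x => hammersleyShifted n τ x) t := by
      exact_mod_cast hle
    have hge' : (countIn (fun x => hammersleyShifted n τ x) t : ℝ) ≤
        countIn (fun x => ((hammersleyShifted n σ x).1, 1 - (hammersleyShifted n σ x).2)) t + 1 := by
      exact_mod_cast hge
    push_cast
    rw [abs_le]
    constructor <;> linarith
  unfold localDisc
  have hc : (Fintype.card (Bool × (Fin n → Bool)) : ℝ) = 2 ^ (n + 1) := by
    simp [pow_succ, mul_comm]
  rw [hc, sub_sub_sub_cancel_right, ← sub_div, abs_div, abs_of_pos (by positivity : (0:ℝ) < 2 ^ (n+1))]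
  gcongr
end

section
/- Let p ∈ [1,∞), n ∈ ℕ, σ ∈ {0,1}^n, and N = 2^{n+1}. Then the L_p-discrepancies of the symmetrized point set R_{n,σ}^{sym} and of the multiset ~R_{n,σ}^{sym} satisfy |L_{p,N}(~R_{n,σ}^{sym}) − L_{p,N}(R_{n,σ}^{sym})| ≤ 1/2^{n+1} = 1/N. -/
open MeasureTheory

/-- van der Corput type value of a digit vector. -/
noncomputable def vdc (n : ℕ) (c : Fin n → Bool) : ℝ :=
  ∑ i : Fin n, bval (c i) / 2 ^ (i.val + 1)

lemma vdc_succ (n : ℕ) (c : Fin (n + 1) → Bool) :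
    vdc (n + 1) c = bval (c 0) / 2 + vdc n (fun i => c i.succ) / 2 := by
  unfold vdc
  rw [Fin.sum_univ_succ, Finset.sum_div]
  congr 1
  · simp
  · refine Finset.sum_congr rfl fun i _ => ?_
    rw [Fin.val_succ, pow_succ _ (i.val + 1)]
    field_simp

lemma vdc_nonneg (n : ℕ) (c : Fin n → Bool) : 0 ≤ vdc n c := by
  unfold vdc
  refine Finset.sum_nonneg fun i _ => ?_
  unfold bval
  split_ifs <;> positivity

lemma vdc_add_compl (n : ℕ) (c : Fin n → Bool) :
    vdc n c + vdc n (fun i => !(c i)) = 1 - 1 / 2 ^ n := by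
  induction n with
  | zero => simp [vdc]
  | succ n ih =>
    have h := ih (fun i => c i.succ)
    rw [vdc_succ, vdc_succ]
    have hb : bval (c 0) + bval (!(c 0)) = 1 := by
      cases c 0 <;> simp [bval]
    have h2 : (1 : ℝ) / 2 ^ (n + 1) = (1 / 2 ^ n) / 2 := by
      rw [pow_succ]; field_simp
    rw [h2]
    linarith

lemma vdc_le (n : ℕ) (c : Fin n → Bool) : vdc n c ≤ 1 - 1 / 2 ^ n := by
  have h := vdc_add_compl n c
  have h2 := vdc_nonneg n (fun i => !(c i))
  linarith

lemma vdc_sep (n : ℕ) (c d : Fin n → Bool) (h1 : vdc n c - vdc n d < 1 / 2 ^ n)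
    (h2 : vdc n d - vdc n c < 1 / 2 ^ n) : c = d := by
  induction n with
  | zero => exact Subsingleton.elim _ _
  | succ n ih =>
    have h3 : (1 : ℝ) / 2 ^ (n + 1) = (1 / 2 ^ n) / 2 := by
      rw [pow_succ]; field_simp
    rw [vdc_succ, vdc_succ, h3] at h1 h2
    have a1 := vdc_nonneg n (fun i => c i.succ)
    have a2 := vdc_nonneg n (fun i => d i.succ)
    have a3 := vdc_le n (fun i => c i.succ)
    have a4 := vdc_le n (fun i => d i.succ)
    have h0 : c 0 = d 0 := by
      cases hc : c 0 <;> cases hd : d 0 <;> simp [bval, hc, hd] at h1 h2 ⊢ <;> 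
        simp at a3 a4 <;> linarith
    rw [h0] at h1 h2
    have ht := ih (fun i => c i.succ) (fun i => d i.succ) (by linarith) (by linarith)
    funext i
    refine Fin.cases h0 (fun j => congrFun ht j) i

/-- Indicator that a point lies in the anchored box. -/
noncomputable def boxInd (q t : ℝ × ℝ) : ℝ :=
  if 0 ≤ q.1 ∧ q.1 < t.1 ∧ 0 ≤ q.2 ∧ q.2 < t.2 then 1 else 0

lemma countIn_eq {ι : Type*} [Fintype ι] (P : ι → ℝ × ℝ) (t : ℝ × ℝ) :
    (countIn P t : ℝ) = ∑ k, boxInd (P k) t := by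
  unfold countIn boxInd
  rw [Finset.card_filter]
  push_cast
  rfl

lemma boxInd_meas (q : ℝ × ℝ) : Measurable (boxInd q) := by
  unfold boxInd
  refine Measurable.ite ?_ measurable_const measurable_const
  have e : {t : ℝ × ℝ | 0 ≤ q.1 ∧ q.1 < t.1 ∧ 0 ≤ q.2 ∧ q.2 < t.2} =
      {t : ℝ × ℝ | 0 ≤ q.1} ∩ ({t | q.1 < t.1} ∩ ({t | 0 ≤ q.2} ∩ {t | q.2 < t.2})) := by
    ext t; simp
  rw [e]
  exact (MeasurableSet.const _).inter ((measurableSet_lt measurable_const measurable_fst).inter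
    ((MeasurableSet.const _).inter (measurableSet_lt measurable_const measurable_snd)))

lemma localDisc_meas {ι : Type*} [Fintype ι] (P : ι → ℝ × ℝ) : Measurable (localDisc P) := by
  unfold localDisc
  simp_rw [countIn_eq]
  refine Measurable.sub (Measurable.div_const ?_ _) (measurable_fst.mul measurable_snd)
  exact Finset.measurable_sum _ fun k _ => boxInd_meas (P k)

lemma vol_box : volume (Set.Icc (0 : ℝ × ℝ) 1) = 1 := by
  have : Set.Icc (0 : ℝ × ℝ) 1 = Set.Icc (0 : ℝ) 1 ×ˢ Set.Icc (0 : ℝ) 1 := by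
    rw [Set.Icc_prod_Icc]; rfl
  rw [this, Measure.volume_eq_prod, Measure.prod_prod]
  simp

instance box_prob : IsProbabilityMeasure (volume.restrict (Set.Icc (0 : ℝ × ℝ) 1)) :=
  ⟨by rw [Measure.restrict_apply_univ, vol_box]⟩

lemma localDisc_memLp {ι : Type*} [Fintype ι] (P : ι → ℝ × ℝ) (p : ENNReal) :
    MemLp (localDisc P) p (volume.restrict (Set.Icc (0 : ℝ × ℝ) 1)) := by
  refine MemLp.of_bound (localDisc_meas P).aestronglyMeasurable 2 ?_
  refine (ae_restrict_iff' measurableSet_Icc).2 (Filter.Eventually.of_forall fun t ht => ?_)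
  obtain ⟨⟨h1, h2⟩, h3, h4⟩ := ht
  simp only [Prod.fst_zero, Prod.snd_zero, Prod.fst_one, Prod.snd_one] at h1 h2 h3 h4
  have hc : (countIn P t : ℝ) ≤ Fintype.card ι := by
    exact_mod_cast Finset.card_le_univ _
  have hd : (countIn P t : ℝ) / Fintype.card ι ≤ 1 := div_le_one_of_le₀ hc (by positivity)
  have hd0 : 0 ≤ (countIn P t : ℝ) / Fintype.card ι := by positivity
  have hm0 : 0 ≤ t.1 * t.2 := mul_nonneg h1 h2
  have hm1 : t.1 * t.2 ≤ 1 := mul_le_one₀ h3 h2 h4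
  rw [Real.norm_eq_abs, abs_le]
  unfold localDisc
  constructor <;> linarith

lemma LpDisc_eq (p : ℝ) (hp : 1 ≤ p) {ι : Type*} [Fintype ι] (P : ι → ℝ × ℝ) :
    LpDisc p P = lpNorm (localDisc P) (ENNReal.ofReal p)
      (volume.restrict (Set.Icc (0 : ℝ × ℝ) 1)) := by
  have hp0 : 0 < p := by linarith
  rw [lpNorm_eq_integral_norm_rpow_toReal (by simpa using hp0) ENNReal.ofReal_ne_top
    (localDisc_meas P).aestronglyMeasurable, ENNReal.toReal_ofReal hp0.le]
  simp [LpDisc]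

lemma LpDisc_le (p : ℝ) (hp : 1 ≤ p) {ι κ : Type*} [Fintype ι] [Fintype κ] (P : ι → ℝ × ℝ)
    (Q : κ → ℝ × ℝ) (C : ℝ) (hC : 0 ≤ C) (h : ∀ t, |localDisc P t - localDisc Q t| ≤ C) :
    LpDisc p P ≤ LpDisc p Q + C := by
  rw [LpDisc_eq p hp, LpDisc_eq p hp]
  have hp' : 1 ≤ ENNReal.ofReal p := by simpa using hp
  have hP := localDisc_memLp P (ENNReal.ofReal p)
  have hQ := localDisc_memLp Q (ENNReal.ofReal p)
  have h1 := lpNorm_add_le hQ (g := localDisc P - localDisc Q) hp'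
  rw [add_sub_cancel] at h1
  refine h1.trans ?_
  gcongr
  rw [← toReal_eLpNorm (hP.sub hQ).1]
  have h2 := eLpNorm_le_of_ae_bound (p := ENNReal.ofReal p)
    (μ := volume.restrict (Set.Icc (0 : ℝ × ℝ) 1)) (f := localDisc P - localDisc Q) (C := C)
    (Filter.Eventually.of_forall fun t => h t)
  rw [measure_univ, ENNReal.one_rpow, one_mul] at h2
  exact ENNReal.toReal_le_of_le_ofReal hC h2

lemma localDisc_diff (n : ℕ) (σ : Fin n → Bool) (t : ℝ × ℝ) :
    |localDisc (hammersleySymTilde n σ) t - localDisc (hammersleySym n σ) t| ≤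
      1 / 2 ^ (n + 1) := by
  classical
  set X : (Fin n → Bool) → ℝ := fun k => ∑ i : Fin n, bval (k i) / 2 ^ (n - i.val) with hX
  set c : (Fin n → Bool) → (Fin n → Bool) := fun k i => k i != !(σ i) with hc
  set Y : (Fin n → Bool) → ℝ := fun k => vdc n (c k) with hY
  have hcinj : ∀ k l, c k = c l → k = l := by
    intro k l h
    funext i
    have := congrFun h i
    simp only [hc] at this
    revert this
    cases k i <;> cases l i <;> cases σ i <;> simp
  have e1 : ∀ k, hammersleySym n σ (true, k) = (X k, Y k) := fun k => rfl
  have e2 : ∀ k, hammersleySymTilde n σ (true, k) = (X k, Y k + 1 / 2 ^ n) := by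
    intro k
    have h := vdc_add_compl n (fun i => k i != σ i)
    have h' : (fun i => !(k i != σ i)) = c k := by
      funext i
      simp only [hc]
      cases k i <;> cases σ i <;> rfl
    rw [h'] at h
    refine Prod.ext rfl ?_
    change 1 - vdc n (fun i => k i != σ i) = vdc n (c k) + 1 / 2 ^ n
    linarith
  have e3 : ∀ k, hammersleySymTilde n σ (false, k) = hammersleySym n σ (false, k) := fun k => rfl
  have key : (countIn (hammersleySym n σ) t : ℝ) - countIn (hammersleySymTilde n σ) t =
      ∑ k, (boxInd (X k, Y k) t - boxInd (X k, Y k + 1 / 2 ^ n) t) := by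
    rw [countIn_eq, countIn_eq, Fintype.sum_prod_type, Fintype.sum_prod_type]
    simp only [Fintype.sum_bool, e1, e2, e3, Finset.sum_sub_distrib]
    ring
  have hδ : (0 : ℝ) < 1 / 2 ^ n := by positivity
  have lo : 0 ≤ (countIn (hammersleySym n σ) t : ℝ) - countIn (hammersleySymTilde n σ) t := by
    rw [key]
    refine Finset.sum_nonneg fun k _ => ?_
    have hy : 0 ≤ Y k := vdc_nonneg _ _
    unfold boxInd
    split_ifs with a b b
    · simp
    · simp
    · exact absurd ⟨b.1, b.2.1, hy, by have := b.2.2.2; simp only at this ⊢; linarith⟩ a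
    · simp
  have hi : (countIn (hammersleySym n σ) t : ℝ) - countIn (hammersleySymTilde n σ) t ≤ 1 := by
    rw [key]
    have hle : ∀ k ∈ (Finset.univ : Finset (Fin n → Bool)),
        boxInd (X k, Y k) t - boxInd (X k, Y k + 1 / 2 ^ n) t ≤
        if Y k < t.2 ∧ t.2 ≤ Y k + 1 / 2 ^ n then (1 : ℝ) else 0 := by
      intro k _
      have hy : 0 ≤ Y k := vdc_nonneg _ _
      unfold boxInd
      split_ifs with a b d d b d d <;> norm_num
      refine d ⟨a.2.2.2, ?_⟩
      by_contra hh
      exact b ⟨a.1, a.2.1, by simp only; linarith, by simpa using hh⟩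
    refine (Finset.sum_le_sum hle).trans ?_
    rw [Finset.sum_boole]
    have : (Finset.univ.filter (fun k => Y k < t.2 ∧ t.2 ≤ Y k + 1 / 2 ^ n)).card ≤ 1 := by
      refine Finset.card_le_one.2 fun k hk l hl => ?_
      simp only [Finset.mem_filter, Finset.mem_univ, true_and] at hk hl
      refine hcinj k l (vdc_sep n _ _ ?_ ?_)
      · change Y k - Y l < _
        linarith
      · change Y l - Y k < _
        linarith
    exact_mod_cast this
  have hcard : (Fintype.card (Bool × (Fin n → Bool)) : ℝ) = 2 ^ (n + 1) := by
    simp [pow_succ, mul_comm]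
  unfold localDisc
  rw [hcard, sub_sub_sub_cancel_right, ← sub_div, abs_div, abs_of_pos (by positivity : (0:ℝ) < 2 ^ (n + 1))]
  gcongr
  rw [abs_le]
  constructor <;> linarith

/-- The `L_p`-discrepancies of `R_{n,σ}^{sym}` and of the multiset `~R_{n,σ}^{sym}`
differ by at most `2^{-(n+1)} = 1/N`. -/
theorem statement18 (p : ℝ) (hp : 1 ≤ p) (n : ℕ) (hn : 0 < n) (σ : Fin n → Bool) :
    |LpDisc p (hammersleySymTilde n σ) - LpDisc p (hammersleySym n σ)| ≤
      1 / 2 ^ (n + 1) := by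
  have hC : (0 : ℝ) ≤ 1 / 2 ^ (n + 1) := by positivity
  have h1 := LpDisc_le p hp _ _ _ hC (localDisc_diff n σ)
  have h2 := LpDisc_le p hp _ _ _ hC
    (fun t => by rw [abs_sub_comm]; exact localDisc_diff n σ t)
  rw [abs_le]
  constructor <;> linarith
end
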